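/- arXiv:2403.09123 — 2 statements merged into one kernel-verified Lean document; each statement's English description precedes it below -/
import Mathlib

section
/- Let B ⊆ {2,…,K} be nonempty, let I_a > 0 for each a ∈ B, and, if B̄^c ≠ ∅, fix values N_a ≥ 0 for a ∈ B̄^c. Define N_{1,1} = 0 if B̄^c = ∅ or Σ_{a∈B̄^c} N_a = 0, and otherwise let N_{1,1} be the unique N_1 > 0 with Σ_{a∈B̄^c} d(μ_1, x_{1,a}(N_1, N_a))/d(μ_a, x_{1,a}(N_1, N_a)) = 1 (the left-hand side decreases continuously and strictly from ∞ to 0 as N_1 increases from 0 to ∞, so N_{1,1} is well defined); set N_{1,2} = max_{a∈B} I_a/d(μ_1, μ_a). Then there exist a unique N_1* ≥ 0 and unique (N_a* ≥ 0 : a ∈ B) such that, setting N_a* := N_a for a ∈ B̄^c, one has Σ_{a=2}^K d(μ_1, x_{1,a}(N_1*, N_a*))/d(μ_a, x_{1,a}(N_1*, N_a*)) = 1 and W_a(N_1*, N_a*) = I_a for every a ∈ B. Moreover N_1* ≥ max(N_{1,1}, N_{1,2}) and N_a* ≥ I_a/d(μ_a, μ_1) for every a ∈ B. -/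
open scoped BigOperators

/-- A single-parameter exponential family, given by the log-partition function `b`,
smooth with positive second derivative on an open interval `Θ`, together with the
inverse `θof` of `b'` on the set of means `S = b'(Θ)`. -/
structure SPEF where
  Θ : Set ℝ
  Θ_isOpen : IsOpen Θ
  Θ_ordConnected : Set.OrdConnected Θ
  Θ_nonempty : Θ.Nonempty
  b : ℝ → ℝ
  b_smooth : ContDiffOn ℝ (⊤ : ℕ∞) b Θ
  b_conv : ∀ t ∈ Θ, 0 < iteratedDeriv 2 b t
  θof : ℝ → ℝ
  θof_mem : ∀ μ ∈ deriv b '' Θ, θof μ ∈ Θ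
  θof_spec : ∀ μ ∈ deriv b '' Θ, deriv b (θof μ) = μ

namespace SPEF

/-- The set of means of the family. -/
def S (F : SPEF) : Set ℝ := deriv F.b '' F.Θ

/-- KL divergence `d(μ, x)` between the members of the family with means `μ` and `x`. -/
noncomputable def d (F : SPEF) (μ x : ℝ) : ℝ :=
  (F.θof μ - F.θof x) * μ - F.b (F.θof μ) + F.b (F.θof x)

end SPEF

/-- A `K`-armed bandit instance with arm distributions in a fixed SPEF; arm `0`
(the paper's arm `1`) is the unique best arm. -/
structure Bandit (K : ℕ) [NeZero K] extends SPEF where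
  two_le : 2 ≤ K
  μ : Fin K → ℝ
  μ_mem : ∀ a, μ a ∈ SPEF.S toSPEF
  μ_best : ∀ a : Fin K, a ≠ 0 → μ a < μ 0

namespace Bandit

variable {K : ℕ} [NeZero K]

/-- KL divergence of the underlying family. -/
noncomputable def d (M : Bandit K) : ℝ → ℝ → ℝ := M.toSPEF.d

/-- The weighted mean `x_{1,a}(N₁, N_a)`. -/
noncomputable def x1 (M : Bandit K) (a : Fin K) (N1 Na : ℝ) : ℝ :=
  (N1 * M.μ 0 + Na * M.μ a) / (N1 + Na)

/-- The index `W_a(N₁, N_a)` of an arm `a ≠ 1`. -/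
noncomputable def W (M : Bandit K) (a : Fin K) (N1 Na : ℝ) : ℝ :=
  N1 * M.d (M.μ 0) (M.x1 a N1 Na) + Na * M.d (M.μ a) (M.x1 a N1 Na)

/-- The set `{2, …, K}` of suboptimal arms. -/
def alt (K : ℕ) [NeZero K] : Finset (Fin K) := Finset.univ.filter (fun a => a ≠ 0)

/-- The anchor function `g(μ, N)`. -/
noncomputable def g (M : Bandit K) (Nv : Fin K → ℝ) : ℝ :=
  (∑ a ∈ alt K, M.d (M.μ 0) (M.x1 a (Nv 0) (Nv a)) / M.d (M.μ a) (M.x1 a (Nv 0) (Nv a))) - 1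

end Bandit

open Bandit

open Set Filter Topology

/-- A strictly monotone function between order-connected sets of reals is continuous. -/
theorem StrictMonoOn.continuousOn_of_ordConnected_image {f : ℝ → ℝ} {s : Set ℝ}
    (hf : StrictMonoOn f s) (hs : s.OrdConnected) (hfs : (f '' s).OrdConnected) :
    ContinuousOn f s := by
  rw [continuousOn_iff_continuous_domRestrict]
  exact continuous_subtype_val.comp (hf.orderIso f s).continuous

namespace SPEF

variable (F : SPEF)

theorem continuousOn_deriv : ContinuousOn (deriv F.b) F.Θ :=
  F.b_smooth.continuousOn_deriv_of_isOpen F.Θ_isOpen (by exact_mod_cast le_top)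

theorem strictMonoOn_deriv : StrictMonoOn (deriv F.b) F.Θ := by
  refine strictMonoOn_of_deriv_pos F.Θ_ordConnected.convex F.continuousOn_deriv fun t ht => ?_
  have h := F.b_conv t (interior_subset ht)
  rwa [iteratedDeriv_succ, iteratedDeriv_one] at h

theorem ordConnected_S : F.S.OrdConnected :=
  (F.Θ_ordConnected.isPreconnected.image _ F.continuousOn_deriv).ordConnected

theorem d_self (x : ℝ) : F.d x x = 0 := by
  simp [d]

theorem strictConvexOn_b : StrictConvexOn ℝ F.Θ F.b :=
  (F.strictMonoOn_deriv.mono interior_subset).strictConvexOn_of_deriv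
    F.Θ_ordConnected.convex F.b_smooth.continuousOn

theorem d_pos {x y : ℝ} (hx : x ∈ F.S) (hy : y ∈ F.S) (hxy : x ≠ y) : 0 < F.d x y := by
  have hs := F.θof_mem x hx
  have ht := F.θof_mem y hy
  have hdx := F.θof_spec x hx
  have hdy := F.θof_spec y hy
  have hdiff : DifferentiableAt ℝ F.b (F.θof x) :=
    (F.b_smooth.contDiffAt (F.Θ_isOpen.mem_nhds hs)).differentiableAt (by simp)
  have hne : F.θof x ≠ F.θof y := fun h => hxy (by rw [← hdx, ← hdy, h])
  unfold d
  rcases hne.lt_or_gt with h | h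
  · have := F.strictConvexOn_b.deriv_lt_slope hs ht h hdiff
    rw [hdx, slope_def_field, lt_div_iff₀ (by linarith)] at this
    linarith
  · have := F.strictConvexOn_b.slope_lt_deriv ht hs h hdiff
    rw [hdx, slope_def_field, div_lt_iff₀ (by linarith)] at this
    linarith

theorem d_nonneg {x y : ℝ} (hx : x ∈ F.S) (hy : y ∈ F.S) : 0 ≤ F.d x y := by
  rcases eq_or_ne x y with rfl | h
  · rw [d_self]
  · exact (F.d_pos hx hy h).le

theorem strictMonoOn_θof : StrictMonoOn F.θof F.S := by
  intro x hx y hy hxy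
  rw [← F.strictMonoOn_deriv.lt_iff_lt (F.θof_mem x hx) (F.θof_mem y hy), F.θof_spec x hx,
    F.θof_spec y hy]
  exact hxy

theorem image_θof : F.θof '' F.S = F.Θ := by
  apply Subset.antisymm
  · rintro _ ⟨x, hx, rfl⟩
    exact F.θof_mem x hx
  · intro t ht
    have hm : deriv F.b t ∈ F.S := mem_image_of_mem _ ht
    exact ⟨deriv F.b t, hm,
      F.strictMonoOn_deriv.injOn (F.θof_mem _ hm) ht (F.θof_spec _ hm)⟩

theorem continuousOn_θof : ContinuousOn F.θof F.S :=
  F.strictMonoOn_θof.continuousOn_of_ordConnected_image F.ordConnected_S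
    (F.image_θof.symm ▸ F.Θ_ordConnected)

theorem continuousOn_d (u : ℝ) : ContinuousOn (F.d u) F.S := by
  have hb : ContinuousOn (fun x => F.b (F.θof x)) F.S :=
    F.b_smooth.continuousOn.comp F.continuousOn_θof F.θof_mem
  have hθ := F.continuousOn_θof
  unfold d
  fun_prop

theorem d_three_point (u x y : ℝ) :
    F.d u x = F.d u y + F.d y x + (F.θof y - F.θof x) * (u - y) := by
  unfold d
  ring

variable {F} {u v : ℝ}

theorem Icc_subset_S (hu : u ∈ F.S) (hv : v ∈ F.S) : Icc v u ⊆ F.S :=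
  F.ordConnected_S.out hv hu

theorem strictAntiOn_d_left (hu : u ∈ F.S) (hv : v ∈ F.S) :
    StrictAntiOn (F.d u) (Icc v u) := by
  intro x hx y hy hxy
  have hxS := Icc_subset_S hu hv hx
  have hyS := Icc_subset_S hu hv hy
  have h := F.d_pos hyS hxS hxy.ne'
  have h' := mul_nonneg (sub_nonneg.2 (F.strictMonoOn_θof hxS hyS hxy).le) (sub_nonneg.2 hy.2)
  rw [F.d_three_point u x y]
  linarith

theorem strictMonoOn_d_right (hu : u ∈ F.S) (hv : v ∈ F.S) :
    StrictMonoOn (F.d v) (Icc v u) := by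
  intro x hx y hy hxy
  have hxS := Icc_subset_S hu hv hx
  have hyS := Icc_subset_S hu hv hy
  have h := F.d_pos hxS hyS hxy.ne
  have h' := mul_nonneg (sub_nonneg.2 (F.strictMonoOn_θof hxS hyS hxy).le) (sub_nonneg.2 hx.1)
  rw [F.d_three_point v y x]
  linarith

variable (F u v) in
/-- The ratio `d(u, x) / d(v, x)` summed by the anchor function. -/
noncomputable def ratio (x : ℝ) : ℝ := F.d u x / F.d v x

theorem ratio_nonneg (hu : u ∈ F.S) (hv : v ∈ F.S) {x : ℝ} (hx : x ∈ Ioc v u) :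
    0 ≤ F.ratio u v x := by
  have hxS := Icc_subset_S hu hv (Ioc_subset_Icc_self hx)
  exact div_nonneg (F.d_nonneg hu hxS) (F.d_nonneg hv hxS)

theorem ratio_pos (hu : u ∈ F.S) (hv : v ∈ F.S) {x : ℝ} (hx : x ∈ Ioo v u) :
    0 < F.ratio u v x := by
  have hxS := Icc_subset_S hu hv (Ioo_subset_Icc_self hx)
  exact div_pos (F.d_pos hu hxS hx.2.ne') (F.d_pos hv hxS hx.1.ne)

theorem strictAntiOn_ratio (hu : u ∈ F.S) (hv : v ∈ F.S) :
    StrictAntiOn (F.ratio u v) (Ioc v u) := by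
  intro x hx y hy hxy
  have hx' := Ioc_subset_Icc_self hx
  have hy' := Ioc_subset_Icc_self hy
  have hyS := Icc_subset_S hu hv hy'
  have hxS := Icc_subset_S hu hv hx'
  exact div_lt_div₀ (strictAntiOn_d_left hu hv hx' hy' hxy)
    (strictMonoOn_d_right hu hv hx' hy' hxy).le (F.d_nonneg hu hxS) (F.d_pos hv hxS hx.1.ne)

theorem continuousOn_ratio (hu : u ∈ F.S) (hv : v ∈ F.S) :
    ContinuousOn (F.ratio u v) (Ioc v u) := by
  have hS : Ioc v u ⊆ F.S := Ioc_subset_Icc_self.trans (Icc_subset_S hu hv)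
  exact ((F.continuousOn_d u).mono hS).div ((F.continuousOn_d v).mono hS)
    fun x hx => (F.d_pos hv (hS hx) hx.1.ne).ne'

theorem exists_ratio_le (hu : u ∈ F.S) (hv : v ∈ F.S) (huv : v < u) {ε : ℝ} (hε : 0 < ε) :
    ∃ c ∈ Ioo v u, ∀ x ∈ Ioc v u, c ≤ x → F.ratio u v x ≤ ε := by
  have hcont := continuousOn_ratio hu hv u ⟨huv, le_rfl⟩
  have hlim : Tendsto (F.ratio u v) (𝓝[<] u) (𝓝 (F.ratio u v u)) :=
    (hcont.mono_of_mem_nhdsWithin (Ioc_mem_nhdsLE huv)).mono_left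
      (nhdsWithin_mono u Iio_subset_Iic_self)
  have hzero : F.ratio u v u = 0 := by simp [ratio, d_self]
  rw [hzero] at hlim
  obtain ⟨c, hc, hcuv⟩ := ((hlim.eventually_lt_const hε).and (Ioo_mem_nhdsLT huv)).exists
  exact ⟨c, hcuv, fun x hx hcx =>
    ((strictAntiOn_ratio hu hv).antitoneOn ⟨hcuv.1, hcuv.2.le⟩ hx hcx).trans hc.le⟩

theorem tendsto_d_nhdsGT (hu : u ∈ F.S) (hv : v ∈ F.S) (huv : v < u) (w : ℝ) :
    Tendsto (F.d w) (𝓝[>] v) (𝓝 (F.d w v)) :=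
  (((F.continuousOn_d w).mono (Icc_subset_S hu hv) v ⟨le_rfl, huv.le⟩).mono_of_mem_nhdsWithin
    (Icc_mem_nhdsGE huv)).mono_left (nhdsWithin_mono v Ioi_subset_Ici_self)

theorem exists_one_le_ratio (hu : u ∈ F.S) (hv : v ∈ F.S) (huv : v < u) :
    ∃ x ∈ Ioo v u, 1 ≤ F.ratio u v x := by
  have hpos : F.d v v < F.d u v := by
    rw [d_self]
    exact F.d_pos hu hv huv.ne'
  obtain ⟨x, hx, hxuv⟩ := (((tendsto_d_nhdsGT hu hv huv v).eventually_lt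
    (tendsto_d_nhdsGT hu hv huv u) hpos).and (Ioo_mem_nhdsGT huv)).exists
  refine ⟨x, hxuv, ?_⟩
  have hxS := Icc_subset_S hu hv (Ioo_subset_Icc_self hxuv)
  rw [ratio, one_le_div (F.d_pos hv hxS hxuv.1.ne)]
  exact hx.le

variable (F u v) in
/-- The index of an arm per unit of allocation to the best arm, as a function of the
weighted mean `x`. -/
noncomputable def unitIndex (x : ℝ) : ℝ := F.d u x + (u - x) / (x - v) * F.d v x

variable (F) in
/-- The convex conjugate of the log-partition function. -/
noncomputable def conj (x : ℝ) : ℝ := F.θof x * x - F.b (F.θof x)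

theorem d_eq_conj (x y : ℝ) : F.d x y = F.conj x - F.conj y - F.θof y * (x - y) := by
  unfold d conj
  ring

theorem unitIndex_eq_conj {x : ℝ} (hx : v < x) :
    F.unitIndex u v x =
      F.conj u - F.conj v - (u - v) * ((F.conj x - F.conj v) / (x - v)) := by
  have : x - v ≠ 0 := (sub_pos.2 hx).ne'
  rw [unitIndex, d_eq_conj, d_eq_conj]
  field_simp
  ring

theorem strictAntiOn_unitIndex (hu : u ∈ F.S) (hv : v ∈ F.S) :
    StrictAntiOn (F.unitIndex u v) (Ioc v u) := by
  intro x hx y hy hxy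
  have hxS := Icc_subset_S hu hv (Ioc_subset_Icc_self hx)
  have hyS := Icc_subset_S hu hv (Ioc_subset_Icc_self hy)
  have hvx := F.d_pos hv hxS hx.1.ne
  have hyx := F.d_pos hyS hxS hxy.ne'
  rw [d_eq_conj] at hvx hyx
  rw [unitIndex_eq_conj hx.1, unitIndex_eq_conj hy.1]
  have hslope : (F.conj x - F.conj v) / (x - v) < (F.conj y - F.conj v) / (y - v) := by
    rw [div_lt_div_iff₀ (sub_pos.2 hx.1) (sub_pos.2 hy.1)]
    nlinarith [mul_pos hvx (sub_pos.2 hxy), mul_pos hyx (sub_pos.2 hx.1)]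
  have := mul_lt_mul_of_pos_left hslope (sub_pos.2 (hx.1.trans_le hx.2))
  linarith

theorem unitIndex_lt (hu : u ∈ F.S) (hv : v ∈ F.S) {x : ℝ} (hx : x ∈ Ioc v u) :
    F.unitIndex u v x < F.d u v := by
  have hxS := Icc_subset_S hu hv (Ioc_subset_Icc_self hx)
  have hxv := F.d_pos hxS hv hx.1.ne'
  rw [unitIndex_eq_conj hx.1, d_eq_conj]
  rw [d_eq_conj] at hxv
  have hslope : F.θof v < (F.conj x - F.conj v) / (x - v) := by
    rw [lt_div_iff₀ (sub_pos.2 hx.1)]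
    linarith
  have := mul_lt_mul_of_pos_left hslope (sub_pos.2 (hx.1.trans_le hx.2))
  linarith

theorem unitIndex_pos (hu : u ∈ F.S) (hv : v ∈ F.S) {x : ℝ} (hx : x ∈ Ioo v u) :
    0 < F.unitIndex u v x := by
  have hxS := Icc_subset_S hu hv (Ioo_subset_Icc_self hx)
  exact add_pos (F.d_pos hu hxS hx.2.ne') (mul_pos
    (div_pos (sub_pos.2 hx.2) (sub_pos.2 hx.1)) (F.d_pos hv hxS hx.1.ne))

theorem continuousOn_unitIndex (hu : u ∈ F.S) (hv : v ∈ F.S) :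
    ContinuousOn (F.unitIndex u v) (Ioc v u) := by
  have hS : Ioc v u ⊆ F.S := Ioc_subset_Icc_self.trans (Icc_subset_S hu hv)
  have hdiv : ContinuousOn (fun x : ℝ => (u - x) / (x - v)) (Ioc v u) :=
    ContinuousOn.div (by fun_prop) (by fun_prop) fun x hx => (sub_pos.2 hx.1).ne'
  exact ((F.continuousOn_d u).mono hS).add (hdiv.mul ((F.continuousOn_d v).mono hS))

theorem exists_unitIndex_eq (hu : u ∈ F.S) (hv : v ∈ F.S) (huv : v < u) {c : ℝ}
    (hc : 0 < c) (hc' : c < F.d u v) : ∃ x ∈ Ioo v u, F.unitIndex u v x = c := by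
  obtain ⟨x, hx, hxuv⟩ := (((tendsto_d_nhdsGT hu hv huv u).eventually_const_lt hc').and
    (Ioo_mem_nhdsGT huv)).exists
  have hxS := Icc_subset_S hu hv (Ioo_subset_Icc_self hxuv)
  have hcx : c ≤ F.unitIndex u v x := by
    have := mul_nonneg (div_nonneg (sub_nonneg.2 hxuv.2.le) (sub_nonneg.2 hxuv.1.le))
      (F.d_nonneg hv hxS)
    unfold unitIndex
    linarith
  have hzero : F.unitIndex u v u = 0 := by simp [unitIndex, d_self]
  obtain ⟨y, hy, rfl⟩ := intermediate_value_Icc' hxuv.2.le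
    ((continuousOn_unitIndex hu hv).mono fun z hz => ⟨hxuv.1.trans_le hz.1, hz.2⟩)
    (show c ∈ Icc _ _ from ⟨hzero.trans_le hc.le, hcx⟩)
  refine ⟨y, ⟨hxuv.1.trans_le hy.1, hy.2.lt_of_ne ?_⟩, rfl⟩
  rintro rfl
  exact hc.ne' hzero

variable (u v) in
/-- The mean of `u` and `v` with weights `N` and `m`. -/
noncomputable def mix (N m : ℝ) : ℝ := (N * u + m * v) / (N + m)

theorem sub_mix {N m : ℝ} (h : N + m ≠ 0) : u - mix u v N m = m * (u - v) / (N + m) := by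
  unfold mix
  field_simp
  ring

theorem mix_sub {N m : ℝ} (h : N + m ≠ 0) : mix u v N m - v = N * (u - v) / (N + m) := by
  unfold mix
  field_simp
  ring

theorem mix_mem_Ioc (huv : v < u) {N m : ℝ} (hN : 0 < N) (hm : 0 ≤ m) :
    mix u v N m ∈ Ioc v u := by
  have h : 0 < N + m := by linarith
  have huv' := sub_pos.2 huv
  constructor
  · rw [← sub_pos, mix_sub h.ne']
    positivity
  · rw [← sub_nonneg, sub_mix h.ne']
    positivity

theorem mix_mem_Ioo (huv : v < u) {N m : ℝ} (hN : 0 < N) (hm : 0 < m) :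
    mix u v N m ∈ Ioo v u := by
  refine ⟨(mix_mem_Ioc huv hN hm.le).1, ?_⟩
  have huv' := sub_pos.2 huv
  rw [← sub_pos, sub_mix (by linarith)]
  positivity

theorem weight_eq_of_mix (huv : v < u) {N m : ℝ} (hN : 0 < N) (hm : 0 ≤ m) :
    N * ((u - mix u v N m) / (mix u v N m - v)) = m := by
  have h : N + m ≠ 0 := by linarith
  have huv' := (sub_pos.2 huv).ne'
  rw [sub_mix h, mix_sub h]
  field_simp

theorem mix_weight {N x : ℝ} (hN : 0 < N) (hx : x ∈ Ioo v u) :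
    mix u v N (N * ((u - x) / (x - v))) = x := by
  have h1 : x - v ≠ 0 := (sub_pos.2 hx.1).ne'
  have h2 : u - v ≠ 0 := (sub_pos.2 (hx.1.trans hx.2)).ne'
  have hsum : N + N * ((u - x) / (x - v)) = N * (u - v) / (x - v) := by
    field_simp
    ring
  rw [mix, hsum]
  field_simp
  ring

theorem mix_le_mix (huv : v < u) {N N' m : ℝ} (hN : 0 < N) (hm : 0 ≤ m) (h : N ≤ N') :
    mix u v N m ≤ mix u v N' m := by
  have h' : u - mix u v N' m ≤ u - mix u v N m := by
    rw [sub_mix (by linarith), sub_mix (by linarith)]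
    exact div_le_div_of_nonneg_left (mul_nonneg hm (sub_pos.2 huv).le) (by linarith)
      (by linarith)
  linarith

theorem continuousOn_mix {m : ℝ} (hm : 0 ≤ m) :
    ContinuousOn (fun N => mix u v N m) (Ioi 0) :=
  ContinuousOn.div (by fun_prop) (by fun_prop) fun N (hN : 0 < N) => by linarith

theorem eventually_le_mix {c : ℝ} (hc : c ∈ Ioo v u) {m : ℝ} (hm : 0 ≤ m) :
    ∀ᶠ N in atTop, c ≤ mix u v N m := by
  filter_upwards [eventually_gt_atTop 0, eventually_ge_atTop (m * (c - v) / (u - c))]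
    with N hN hN'
  rw [div_le_iff₀ (sub_pos.2 hc.2)] at hN'
  rw [mix, le_div_iff₀ (by linarith)]
  linarith

variable (F u v) in
/-- The index of an arm of mean `v` against the best arm of mean `u`. -/
noncomputable def index (N m : ℝ) : ℝ :=
  N * F.d u (mix u v N m) + m * F.d v (mix u v N m)

theorem index_eq_unitIndex (huv : v < u) {N m : ℝ} (hN : 0 < N) (hm : 0 ≤ m) :
    F.index u v N m = N * F.unitIndex u v (mix u v N m) := by
  rw [index, unitIndex, mul_add, ← mul_assoc, weight_eq_of_mix huv hN hm]

theorem index_le_mul_d (hu : u ∈ F.S) (hv : v ∈ F.S) (huv : v < u) {N m : ℝ} (hN : 0 < N)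
    (hm : 0 ≤ m) : F.index u v N m ≤ m * F.d v u := by
  have h : N + m ≠ 0 := by linarith
  have hx := Icc_subset_S hu hv (Ioc_subset_Icc_self (mix_mem_Ioc huv hN hm))
  have hmul : (N + m) * mix u v N m = N * u + m * v := by
    unfold mix
    field_simp
  have hd := mul_nonneg (by linarith : 0 ≤ N + m) (F.d_nonneg hx hu)
  have hid : m * F.d v u - F.index u v N m = (N + m) * F.d (mix u v N m) u := by
    rw [index]
    generalize mix u v N m = x at hmul
    rw [d_eq_conj, d_eq_conj, d_eq_conj, d_eq_conj]
    linear_combination (F.θof u - F.θof x) * hmul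
  linarith

/-- An allocation with positive index is positive, and its best-arm weight exceeds the
threshold `I / d(u, v)`. -/
theorem weights_of_index_eq (hu : u ∈ F.S) (hv : v ∈ F.S) (huv : v < u) {I N m : ℝ}
    (hI : 0 < I) (hN : 0 ≤ N) (hm : 0 ≤ m) (h : F.index u v N m = I) :
    0 < N ∧ 0 < m ∧ I / F.d u v < N := by
  have hN' : 0 < N := by
    refine hN.lt_of_ne' ?_
    rintro rfl
    rcases hm.eq_or_lt with rfl | hm'
    · simp [index] at h
      exact hI.ne h
    · have hmix : mix u v 0 m = v := by
        unfold mix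
        field_simp
        ring
      rw [index, hmix, d_self] at h
      simp at h
      exact hI.ne h
  have hm' : 0 < m := by
    refine hm.lt_of_ne' ?_
    rintro rfl
    have := index_le_mul_d hu hv huv hN' hm
    linarith
  refine ⟨hN', hm', ?_⟩
  rw [div_lt_iff₀ (F.d_pos hu hv huv.ne'), ← h, index_eq_unitIndex huv hN' hm]
  exact mul_lt_mul_of_pos_left (unitIndex_lt hu hv (mix_mem_Ioc huv hN' hm)) hN'

/-- The level set `index = I`, parametrized by the best-arm weight `N` through the
weighted mean `ξ N`. -/
theorem exists_level_curve (hu : u ∈ F.S) (hv : v ∈ F.S) (huv : v < u) {I : ℝ} (hI : 0 < I) :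
    ∃ ξ : ℝ → ℝ, (∀ N ∈ Ioi (I / F.d u v), ξ N ∈ Ioo v u ∧ N * F.unitIndex u v (ξ N) = I) ∧
      StrictMonoOn ξ (Ioi (I / F.d u v)) ∧ ContinuousOn ξ (Ioi (I / F.d u v)) ∧
      (∀ x ∈ Ioo v u, ∃ N ∈ Ioi (I / F.d u v), ξ N = x) ∧
      ∀ N ∈ Ioi (I / F.d u v), ∀ x ∈ Ioo v u, N * F.unitIndex u v x = I → x = ξ N := by
  have hd := F.d_pos hu hv huv.ne'
  have hpos : ∀ N ∈ Ioi (I / F.d u v), 0 < N := fun N hN => (div_pos hI hd).trans hN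
  have hex : ∀ N ∈ Ioi (I / F.d u v), ∃ x ∈ Ioo v u, N * F.unitIndex u v x = I := by
    intro N hN
    have hN0 := hpos N hN
    obtain ⟨x, hx, hxN⟩ := exists_unitIndex_eq hu hv huv (div_pos hI hN0)
      ((div_lt_comm₀ hd hN0).1 hN)
    exact ⟨x, hx, by rw [hxN]; field_simp⟩
  choose! ξ hξ using hex
  have hanti := (strictAntiOn_unitIndex hu hv).mono Ioo_subset_Ioc_self
  have huniq : ∀ N ∈ Ioi (I / F.d u v), ∀ x ∈ Ioo v u, N * F.unitIndex u v x = I → x = ξ N := by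
    intro N hN x hx h
    exact hanti.injOn hx (hξ N hN).1
      (mul_left_cancel₀ (hpos N hN).ne' (h.trans (hξ N hN).2.symm))
  have hmono : StrictMonoOn ξ (Ioi (I / F.d u v)) := by
    intro N hN N' hN' hlt
    rw [← hanti.lt_iff_gt (hξ N' hN').1 (hξ N hN).1]
    have h0 := unitIndex_pos hu hv (hξ N' hN').1
    by_contra! hle
    have h1 := mul_lt_mul_of_pos_right hlt h0
    have h2 := mul_le_mul_of_nonneg_left hle (hpos N hN).le
    linarith [(hξ N hN).2, (hξ N' hN').2]
  have hsurj : ∀ x ∈ Ioo v u, ∃ N ∈ Ioi (I / F.d u v), ξ N = x := by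
    intro x hx
    have h0 := unitIndex_pos hu hv hx
    have hmem : I / F.unitIndex u v x ∈ Ioi (I / F.d u v) :=
      div_lt_div_of_pos_left hI h0 (unitIndex_lt hu hv (Ioo_subset_Ioc_self hx))
    exact ⟨_, hmem, (huniq _ hmem x hx (div_mul_cancel₀ _ h0.ne')).symm⟩
  have himage : ξ '' Ioi (I / F.d u v) = Ioo v u :=
    Subset.antisymm (image_subset_iff.2 fun N hN => (hξ N hN).1) fun x hx => hsurj x hx
  exact ⟨ξ, hξ, hmono, hmono.continuousOn_of_ordConnected_image ordConnected_Ioi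
    (himage ▸ ordConnected_Ioo), hsurj, huniq⟩

end SPEF

/-- Theorem 2.1 / Theorem A.1 of the paper: existence and uniqueness of
the positive solution to the anchored index equations, together with lower bounds. -/
theorem statement_0 {K : ℕ} [NeZero K] (M : Bandit K)
    (B : Finset (Fin K)) (hBne : B.Nonempty) (hBsub : B ⊆ alt K)
    (I : Fin K → ℝ) (hI : ∀ a ∈ B, 0 < I a)
    (Nout : Fin K → ℝ) (hNout : ∀ a ∈ alt K \ B, 0 ≤ Nout a)
    (N11 : ℝ)
    (hN11zero : (alt K \ B = ∅ ∨ ∑ a ∈ alt K \ B, Nout a = 0) → N11 = 0)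
    (hN11pos : ¬ (alt K \ B = ∅ ∨ ∑ a ∈ alt K \ B, Nout a = 0) →
      0 < N11 ∧
        ∑ a ∈ alt K \ B,
          M.d (M.μ 0) (M.x1 a N11 (Nout a)) / M.d (M.μ a) (M.x1 a N11 (Nout a)) = 1) :
    ∃ Nv : Fin K → ℝ,
      -- existence
      ((0 ≤ Nv 0 ∧ (∀ a ∈ B, 0 ≤ Nv a) ∧ (∀ a ∈ alt K \ B, Nv a = Nout a)) ∧
        (∑ a ∈ alt K,
          M.d (M.μ 0) (M.x1 a (Nv 0) (Nv a)) / M.d (M.μ a) (M.x1 a (Nv 0) (Nv a)) = 1) ∧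
        (∀ a ∈ B, M.W a (Nv 0) (Nv a) = I a)) ∧
      -- uniqueness
      (∀ Nv' : Fin K → ℝ,
        ((0 ≤ Nv' 0 ∧ (∀ a ∈ B, 0 ≤ Nv' a) ∧ (∀ a ∈ alt K \ B, Nv' a = Nout a)) ∧
          (∑ a ∈ alt K,
            M.d (M.μ 0) (M.x1 a (Nv' 0) (Nv' a)) / M.d (M.μ a) (M.x1 a (Nv' 0) (Nv' a)) = 1) ∧
          (∀ a ∈ B, M.W a (Nv' 0) (Nv' a) = I a)) →
        Nv' 0 = Nv 0 ∧ ∀ a ∈ B, Nv' a = Nv a) ∧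
      -- lower bounds
      max N11 (B.sup' hBne fun a => I a / M.d (M.μ 0) (M.μ a)) ≤ Nv 0 ∧
      ∀ a ∈ B, I a / M.d (M.μ a) (M.μ 0) ≤ Nv a := by
  classical
  set F := M.toSPEF
  set u := M.μ 0
  have hu : u ∈ F.S := M.μ_mem 0
  have hv : ∀ a, M.μ a ∈ F.S := M.μ_mem
  have huv : ∀ a ∈ alt K, M.μ a < u := fun a ha => M.μ_best a (by simpa [alt] using ha)
  have hcurve : ∀ a ∈ B, _ := fun a ha =>
    F.exists_level_curve hu (hv a) (huv a (hBsub ha)) (hI a ha)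
  choose! ξ hξ hξmono hξcont hξsurj hξuniq using hcurve
  set L := B.sup' hBne fun a => I a / F.d u (M.μ a) with hL
  have hle : ∀ a ∈ B, I a / F.d u (M.μ a) ≤ L := fun a ha =>
    Finset.le_sup' (fun a => I a / F.d u (M.μ a)) ha
  have hL0 : 0 < L := by
    obtain ⟨a, ha⟩ := hBne
    exact (div_pos (hI a ha) (F.d_pos hu (hv a) (huv a (hBsub ha)).ne')).trans_le (hle a ha)
  have hsub : ∀ a ∈ B, Ioi L ⊆ Ioi (I a / F.d u (M.μ a)) := fun a ha =>
    Ioi_subset_Ioi (hle a ha)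
  -- the weighted mean of each arm along the curve, as a function of the weight of the best arm
  set x : Fin K → ℝ → ℝ := fun a N => if a ∈ B then ξ a N else SPEF.mix u (M.μ a) N (Nout a)
  have hxB : ∀ a ∈ B, x a = ξ a := fun a ha => by simp [x, ha]
  have hxout : ∀ a ∈ alt K \ B, x a = fun N => SPEF.mix u (M.μ a) N (Nout a) := fun a ha => by
    simp [x, (Finset.mem_sdiff.1 ha).2]
  have hcases : ∀ a ∈ alt K, a ∈ B ∨ a ∈ alt K \ B := fun a ha => by
    by_cases h : a ∈ B <;> simp [h, ha]
  have hxmem : ∀ a ∈ alt K, ∀ N ∈ Ioi L, x a N ∈ Ioc (M.μ a) u := by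
    intro a ha N hN
    rcases hcases a ha with h | h
    · rw [hxB a h]
      exact Ioo_subset_Ioc_self (hξ a h N (hsub a h hN)).1
    · rw [hxout a h]
      exact SPEF.mix_mem_Ioc (huv a ha) (hL0.trans hN) (hNout a h)
  have hxmono : ∀ a ∈ alt K, MonotoneOn (x a) (Ioi L) := by
    intro a ha
    rcases hcases a ha with h | h
    · rw [hxB a h]
      exact (hξmono a h).monotoneOn.mono (hsub a h)
    · rw [hxout a h]
      exact fun N hN N' _ hNN' =>
        SPEF.mix_le_mix (huv a ha) (hL0.trans hN) (hNout a h) hNN'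
  have hxcont : ∀ a ∈ alt K, ContinuousOn (x a) (Ioi L) := by
    intro a ha
    rcases hcases a ha with h | h
    · rw [hxB a h]
      exact (hξcont a h).mono (hsub a h)
    · rw [hxout a h]
      exact (SPEF.continuousOn_mix (hNout a h)).mono (Ioi_subset_Ioi hL0.le)
  have hxtop : ∀ a ∈ alt K, ∀ c ∈ Ioo (M.μ a) u, ∀ᶠ N in atTop, c ≤ x a N := by
    intro a ha c hc
    rcases hcases a ha with h | h
    · rw [hxB a h]
      obtain ⟨N₀, hN₀, rfl⟩ := hξsurj a h c hc
      filter_upwards [eventually_ge_atTop N₀] with N hN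
      exact (hξmono a h).monotoneOn hN₀ (lt_of_lt_of_le hN₀ hN) hN
    · rw [hxout a h]
      exact SPEF.eventually_le_mix hc (hNout a h)
  set G : ℝ → ℝ := fun N => ∑ a ∈ alt K, F.ratio u (M.μ a) (x a N)
  have hGanti : StrictAntiOn G (Ioi L) := by
    intro N hN N' hN' hlt
    obtain ⟨a, ha⟩ := hBne
    refine Finset.sum_lt_sum (fun a ha => (SPEF.strictAntiOn_ratio hu (hv a)).antitoneOn
      (hxmem a ha N hN) (hxmem a ha N' hN') (hxmono a ha hN hN' hlt.le)) ⟨a, hBsub ha, ?_⟩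
    refine SPEF.strictAntiOn_ratio hu (hv a) (hxmem a (hBsub ha) N hN)
      (hxmem a (hBsub ha) N' hN') ?_
    rw [hxB a ha]
    exact hξmono a ha (hsub a ha hN) (hsub a ha hN') hlt
  have hGcont : ContinuousOn G (Ioi L) := continuousOn_finsetSum _ fun a ha =>
    (SPEF.continuousOn_ratio hu (hv a)).comp (hxcont a ha) (hxmem a ha)
  -- a point where the anchor sum is at least one
  obtain ⟨Nlo, hNlo, hGlo⟩ : ∃ N ∈ Ioi L, 1 ≤ G N := by
    obtain ⟨a, ha, hLa⟩ := Finset.exists_mem_eq_sup' hBne fun a => I a / F.d u (M.μ a)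
    obtain ⟨y, hy, hy1⟩ := SPEF.exists_one_le_ratio hu (hv a) (huv a (hBsub ha))
    obtain ⟨N, hN, rfl⟩ := hξsurj a ha y hy
    have hNL : N ∈ Ioi L := by
      rw [hL, hLa]
      exact hN
    refine ⟨N, hNL, hy1.trans ?_⟩
    rw [← hxB a ha]
    exact Finset.single_le_sum (f := fun a => F.ratio u (M.μ a) (x a N))
      (fun a ha => SPEF.ratio_nonneg hu (hv a) (hxmem a ha N hNL)) (hBsub ha)
  -- a later point where it is at most one
  obtain ⟨Nhi, hNhi, hGhi⟩ : ∃ N, Nlo ≤ N ∧ G N ≤ 1 := by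
    have hcard : 0 < ((alt K).card : ℝ) := by
      exact_mod_cast Finset.card_pos.2 (hBne.mono hBsub)
    have hev : ∀ a ∈ alt K, ∀ᶠ N in atTop,
        F.ratio u (M.μ a) (x a N) ≤ ((alt K).card : ℝ)⁻¹ := by
      intro a ha
      obtain ⟨c, hc, hcle⟩ := SPEF.exists_ratio_le hu (hv a) (huv a ha) (inv_pos.2 hcard)
      filter_upwards [hxtop a ha c hc, eventually_gt_atTop L] with N hN hNL
      exact hcle _ (hxmem a ha N hNL) hN
    obtain ⟨N, hN, hN'⟩ :=
      (((Filter.eventually_all_finset _).2 hev).and (eventually_ge_atTop Nlo)).exists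
    refine ⟨N, hN', (Finset.sum_le_sum hN).trans ?_⟩
    simp [hcard.ne']
  obtain ⟨N, hN, hGN⟩ := intermediate_value_Icc' hNhi
    (hGcont.mono fun y hy => lt_of_lt_of_le hNlo hy.1) (show (1 : ℝ) ∈ Icc _ _ from ⟨hGhi, hGlo⟩)
  have hNL : N ∈ Ioi L := lt_of_lt_of_le hNlo hN.1
  have hN0 : 0 < N := hL0.trans hNL
  have hdata : ∀ Nv' : Fin K → ℝ,
      ((0 ≤ Nv' 0 ∧ (∀ a ∈ B, 0 ≤ Nv' a) ∧ (∀ a ∈ alt K \ B, Nv' a = Nout a)) ∧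
        (∑ a ∈ alt K, F.ratio u (M.μ a) (SPEF.mix u (M.μ a) (Nv' 0) (Nv' a)) = 1) ∧
        (∀ a ∈ B, F.index u (M.μ a) (Nv' 0) (Nv' a) = I a)) →
      Nv' 0 = N ∧ ∀ a ∈ B,
        0 < Nv' a ∧ SPEF.mix u (M.μ a) (Nv' 0) (Nv' a) = ξ a N := by
    rintro Nv' ⟨⟨h0, hB0, hout⟩, hanchor, hindex⟩
    have hw := fun a (ha : a ∈ B) => F.weights_of_index_eq hu (hv a) (huv a (hBsub ha))
      (hI a ha) h0 (hB0 a ha) (hindex a ha)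
    have hN'L : Nv' 0 ∈ Ioi L := (Finset.sup'_lt_iff hBne).2 fun a ha => (hw a ha).2.2
    have hN'0 : 0 < Nv' 0 := hL0.trans hN'L
    have hmix : ∀ a ∈ B, SPEF.mix u (M.μ a) (Nv' 0) (Nv' a) = ξ a (Nv' 0) := fun a ha =>
      hξuniq a ha _ (hsub a ha hN'L) _
        (SPEF.mix_mem_Ioo (huv a (hBsub ha)) hN'0 (hw a ha).2.1) (by
          rw [← SPEF.index_eq_unitIndex (huv a (hBsub ha)) hN'0 (hB0 a ha), hindex a ha])
    have hGN' : G (Nv' 0) = 1 := by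
      rw [← hanchor]
      refine Finset.sum_congr rfl fun a ha => ?_
      rcases hcases a ha with h | h
      · rw [hmix a h, hxB a h]
      · rw [hxout a h, hout a h]
    have hEq : Nv' 0 = N := hGanti.injOn hN'L hNL (hGN'.trans hGN.symm)
    exact ⟨hEq, fun a ha => ⟨(hw a ha).2.1, by rw [hmix a ha, hEq]⟩⟩
  set Nv : Fin K → ℝ := fun a =>
    if a = 0 then N else if a ∈ B then N * ((u - ξ a N) / (ξ a N - M.μ a)) else Nout a
  have hne : ∀ a ∈ alt K, a ≠ 0 := fun a ha => by simpa [alt] using ha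
  have hNv0 : Nv 0 = N := by simp [Nv]
  have hNvB : ∀ a ∈ B, Nv a = N * ((u - ξ a N) / (ξ a N - M.μ a)) := fun a ha => by
    simp [Nv, ha, hne a (hBsub ha)]
  have hNvout : ∀ a ∈ alt K \ B, Nv a = Nout a := fun a ha => by
    have h := Finset.mem_sdiff.1 ha
    simp [Nv, h.2, hne a h.1]
  have hξN : ∀ a ∈ B, ξ a N ∈ Ioo (M.μ a) u ∧ N * F.unitIndex u (M.μ a) (ξ a N) = I a :=
    fun a ha => hξ a ha N (hsub a ha hNL)
  have hNvpos : ∀ a ∈ B, 0 ≤ Nv a := fun a ha => by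
    rw [hNvB a ha]
    exact mul_nonneg hN0.le (div_nonneg (sub_nonneg.2 (hξN a ha).1.2.le)
      (sub_nonneg.2 (hξN a ha).1.1.le))
  have hNvmix : ∀ a ∈ B, SPEF.mix u (M.μ a) N (Nv a) = ξ a N := fun a ha => by
    rw [hNvB a ha, SPEF.mix_weight hN0 (hξN a ha).1]
  have hNvindex : ∀ a ∈ B, F.index u (M.μ a) (Nv 0) (Nv a) = I a := fun a ha => by
    rw [hNv0, SPEF.index_eq_unitIndex (huv a (hBsub ha)) hN0 (hNvpos a ha), hNvmix a ha,
      (hξN a ha).2]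
  have hNvanchor : ∑ a ∈ alt K, F.ratio u (M.μ a) (SPEF.mix u (M.μ a) (Nv 0) (Nv a)) = 1 := by
    rw [← hGN, hNv0]
    refine Finset.sum_congr rfl fun a ha => ?_
    rcases hcases a ha with h | h
    · rw [hNvmix a h, hxB a h]
    · rw [hxout a h, hNvout a h]
  refine ⟨Nv, ⟨⟨hNv0 ▸ hN0.le, hNvpos, hNvout⟩, hNvanchor, hNvindex⟩, ?_, max_le ?_ ?_, ?_⟩
  · intro Nv' h
    obtain ⟨hEq, hB'⟩ := hdata Nv' h
    refine ⟨hEq.trans hNv0.symm, fun a ha => ?_⟩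
    obtain ⟨hpos, hmix⟩ := hB' a ha
    rw [hEq] at hmix
    rw [hNvB a ha, ← hmix, SPEF.weight_eq_of_mix (huv a (hBsub ha)) hN0 hpos.le]
  · rw [hNv0]
    by_cases hzero : alt K \ B = ∅ ∨ ∑ a ∈ alt K \ B, Nout a = 0
    · rw [hN11zero hzero]
      exact hN0.le
    · obtain ⟨hN11, hone⟩ := hN11pos hzero
      change ∑ a ∈ alt K \ B, F.ratio u (M.μ a) (SPEF.mix u (M.μ a) N11 (Nout a)) = 1 at hone
      by_contra! hlt
      have hBpos : 0 < ∑ a ∈ B, F.ratio u (M.μ a) (x a N) := Finset.sum_pos (fun a ha => by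
        rw [hxB a ha]
        exact SPEF.ratio_pos hu (hv a) (hξN a ha).1) hBne
      have hout : 1 ≤ ∑ a ∈ alt K \ B, F.ratio u (M.μ a) (x a N) := by
        rw [← hone]
        refine Finset.sum_le_sum fun a ha => ?_
        have haK := (Finset.mem_sdiff.1 ha).1
        rw [hxout a ha]
        exact (SPEF.strictAntiOn_ratio hu (hv a)).antitoneOn
          (SPEF.mix_mem_Ioc (huv a haK) hN0 (hNout a ha))
          (SPEF.mix_mem_Ioc (huv a haK) hN11 (hNout a ha))
          (SPEF.mix_le_mix (huv a haK) hN0 (hNout a ha) hlt.le)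
      have htotal : ∑ a ∈ alt K, F.ratio u (M.μ a) (x a N) = 1 := hGN
      rw [← Finset.sum_sdiff hBsub] at htotal
      linarith
  · rw [hNv0]
    exact le_of_lt hNL
  · intro a ha
    have haK := hBsub ha
    change I a / F.d (M.μ a) u ≤ Nv a
    rw [div_le_iff₀ (F.d_pos (hv a) hu (huv a haK).ne), ← hNvindex a ha, hNv0]
    exact SPEF.index_le_mul_d hu (hv a) (huv a haK) hN0 (hNvpos a ha)
end

section
/- For each a ∈ {2,…,K} let x_a ∈ (μ_a, μ_1) be the unique point with d(μ_1, x_a) = d(μ_a, x_a), and set d_a = (μ_1 − x_a)/(x_a − μ_a). Let N = (N_1,…,N_K) ∈ ℝ_{>0}^K be an allocation with g(μ, N) = 0, let ã ∈ argmax_{a≠1} d(μ_1, x_{1,a})/d(μ_a, x_{1,a}), let x(ã) ∈ (μ_ã, μ_1) be the unique point with d(μ_1, x(ã)) = (K−1)^{-1}·d(μ_ã, x(ã)), and set d(ã) = (μ_1 − x(ã))/(x(ã) − μ_ã). Then, writing N = Σ_{a∈[K]} N_a for the total allocation, (1 + Σ_{a≠1} d_a)^{-1}·N ≤ N_1 ≤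 (1 + d(ã))^{-1}·N. -/
open scoped BigOperators

open Bandit

namespace SPEF

lemma deriv_strictMonoOn (F : SPEF) : StrictMonoOn (deriv F.b) F.Θ := by
  have hpos : ∀ t ∈ F.Θ, 0 < deriv (deriv F.b) t := fun t ht => by
    simpa [iteratedDeriv_succ, iteratedDeriv_zero] using F.b_conv t ht
  refine strictMonoOn_of_deriv_pos F.Θ_ordConnected.convex (fun t ht => ?_)
    (fun t ht => hpos t (interior_subset ht))
  exact (differentiableAt_of_deriv_ne_zero (hpos t ht).ne').continuousAt.continuousWithinAt

lemma ordConnected_S_s7 (F : SPEF) : F.S.OrdConnected := by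
  have hcont : ContinuousOn (deriv F.b) F.Θ :=
    F.b_smooth.continuousOn_deriv_of_isOpen F.Θ_isOpen (by simp)
  exact (F.Θ_ordConnected.isPreconnected.image _ hcont).ordConnected

/-- The increment of `b` between the parameters of two means lies strictly between the
increments of the tangent lines at these parameters. -/
lemma increment_bounds (F : SPEF) {x y : ℝ} (hx : x ∈ F.S) (hy : y ∈ F.S) (hxy : x < y) :
    F.θof x < F.θof y ∧
    x * (F.θof y - F.θof x) < F.b (F.θof y) - F.b (F.θof x) ∧
    F.b (F.θof y) - F.b (F.θof x) < y * (F.θof y - F.θof x) := by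
  have hmx := F.θof_mem x hx
  have hmy := F.θof_mem y hy
  have hlt : F.θof x < F.θof y := by
    rw [← F.deriv_strictMonoOn.lt_iff_lt hmx hmy, F.θof_spec x hx, F.θof_spec y hy]
    exact hxy
  have hsub : Set.Icc (F.θof x) (F.θof y) ⊆ F.Θ := F.Θ_ordConnected.out hmx hmy
  have hdiff : DifferentiableOn ℝ F.b F.Θ := F.b_smooth.differentiableOn (by simp)
  obtain ⟨c, hc, hceq⟩ := exists_deriv_eq_slope F.b hlt (hdiff.continuousOn.mono hsub)
    (hdiff.mono (Set.Ioo_subset_Icc_self.trans hsub))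
  have hcΘ := hsub (Set.Ioo_subset_Icc_self hc)
  have hxc := F.deriv_strictMonoOn hmx hcΘ hc.1
  have hcy := F.deriv_strictMonoOn hcΘ hmy hc.2
  rw [F.θof_spec x hx] at hxc
  rw [F.θof_spec y hy] at hcy
  have hpos : 0 < F.θof y - F.θof x := sub_pos.2 hlt
  rw [hceq] at hxc hcy
  exact ⟨hlt, (lt_div_iff₀ hpos).1 hxc, (div_lt_iff₀ hpos).1 hcy⟩

lemma d_self_s7 (F : SPEF) (μ : ℝ) : F.d μ μ = 0 := by simp [d]

lemma d_strictAntiOn (F : SPEF) (μ : ℝ) : StrictAntiOn (F.d μ) (F.S ∩ Set.Iic μ) := by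
  intro x hx y hy hxy
  obtain ⟨hlt, -, h⟩ := F.increment_bounds hx.1 hy.1 hxy
  have := mul_le_mul_of_nonneg_right (Set.mem_Iic.1 hy.2) (sub_pos.2 hlt).le
  simp only [d]
  linarith

lemma d_strictMonoOn (F : SPEF) (μ : ℝ) : StrictMonoOn (F.d μ) (F.S ∩ Set.Ici μ) := by
  intro x hx y hy hxy
  obtain ⟨hlt, h, -⟩ := F.increment_bounds hx.1 hy.1 hxy
  have := mul_le_mul_of_nonneg_right (Set.mem_Ici.1 hx.2) (sub_pos.2 hlt).le
  simp only [d]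
  linarith

lemma d_pos_of_lt (F : SPEF) {μ x : ℝ} (hμ : μ ∈ F.S) (hx : x ∈ F.S) (h : μ < x) :
    0 < F.d μ x := by
  simpa [F.d_self_s7] using
    F.d_strictMonoOn μ ⟨hμ, Set.mem_Ici.2 le_rfl⟩ ⟨hx, Set.mem_Ici.2 h.le⟩ h

lemma d_pos_of_gt (F : SPEF) {μ x : ℝ} (hμ : μ ∈ F.S) (hx : x ∈ F.S) (h : x < μ) :
    0 < F.d μ x := by
  simpa [F.d_self_s7] using
    F.d_strictAntiOn μ ⟨hx, Set.mem_Iic.2 h.le⟩ ⟨hμ, Set.mem_Iic.2 le_rfl⟩ h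

lemma div_d_strictAntiOn (F : SPEF) {l u : ℝ} (hl : l ∈ F.S) (hu : u ∈ F.S) :
    StrictAntiOn (fun x => F.d u x / F.d l x) (Set.Ioo l u) := by
  intro x hx y hy hxy
  have hxS := F.ordConnected_S_s7.out hl hu (Set.Ioo_subset_Icc_self hx)
  have hyS := F.ordConnected_S_s7.out hl hu (Set.Ioo_subset_Icc_self hy)
  exact div_lt_div₀ (F.d_strictAntiOn u ⟨hxS, hx.2.le⟩ ⟨hyS, hy.2.le⟩ hxy)
    (F.d_strictMonoOn l ⟨hxS, hx.1.le⟩ ⟨hyS, hy.1.le⟩ hxy).le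
    (F.d_pos_of_gt hu hxS hx.2).le (F.d_pos_of_lt hl hxS hx.1)

end SPEF

namespace Bandit

variable {K : ℕ} [NeZero K]

lemma mem_alt {a : Fin K} : a ∈ alt K ↔ a ≠ 0 := by simp [alt]

lemma card_alt : ((alt K).card : ℝ) = (K : ℝ) - 1 := by
  have h : alt K = Finset.univ.erase 0 := by ext; simp [alt]
  rw [h, Finset.cast_card_erase_of_mem (Finset.mem_univ _)]
  simp

lemma sum_eq_add_sum_alt (f : Fin K → ℝ) : ∑ a, f a = f 0 + ∑ a ∈ alt K, f a := by
  have h : alt K = Finset.univ.erase 0 := by ext; simp [alt]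
  rw [h, Finset.add_sum_erase _ _ (Finset.mem_univ _)]

lemma x1_mem (M : Bandit K) {a : Fin K} (ha : a ≠ 0) {N1 Na : ℝ} (h1 : 0 < N1) (h2 : 0 < Na) :
    M.x1 a N1 Na ∈ Set.Ioo (M.μ a) (M.μ 0) := by
  have := M.μ_best a ha
  simp only [x1, Set.mem_Ioo]
  rw [lt_div_iff₀ (by positivity), div_lt_iff₀ (by positivity)]
  constructor <;> nlinarith

/-- The ratio of the divergences to the two arms. -/
noncomputable def ratio (M : Bandit K) (a : Fin K) (x : ℝ) : ℝ :=
  M.d (M.μ 0) x / M.d (M.μ a) x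

lemma ratio_strictAntiOn (M : Bandit K) (a : Fin K) :
    StrictAntiOn (M.ratio a) (Set.Ioo (M.μ a) (M.μ 0)) :=
  M.toSPEF.div_d_strictAntiOn (M.μ_mem a) (M.μ_mem 0)

lemma d_low_pos (M : Bandit K) {a : Fin K} {x : ℝ} (hx : x ∈ Set.Ioo (M.μ a) (M.μ 0)) :
    0 < M.d (M.μ a) x :=
  M.toSPEF.d_pos_of_lt (M.μ_mem a)
    (M.ordConnected_S_s7.out (M.μ_mem a) (M.μ_mem 0) (Set.Ioo_subset_Icc_self hx)) hx.1

lemma ratio_pos (M : Bandit K) {a : Fin K} {x : ℝ} (hx : x ∈ Set.Ioo (M.μ a) (M.μ 0)) :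
    0 < M.ratio a x :=
  div_pos (M.toSPEF.d_pos_of_gt (M.μ_mem 0)
    (M.ordConnected_S_s7.out (M.μ_mem a) (M.μ_mem 0) (Set.Ioo_subset_Icc_self hx)) hx.2)
    (M.d_low_pos hx)

lemma le_x1_iff (M : Bandit K) {a : Fin K} {N1 Na x : ℝ} (h1 : 0 < N1) (h2 : 0 < Na)
    (hx : M.μ a < x) :
    x ≤ M.x1 a N1 Na ↔ Na ≤ N1 * ((M.μ 0 - x) / (x - M.μ a)) := by
  rw [x1, le_div_iff₀ (by positivity), ← mul_div_assoc, le_div_iff₀ (sub_pos.2 hx)]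
  constructor <;> intro h <;> linarith

lemma x1_le_iff (M : Bandit K) {a : Fin K} {N1 Na x : ℝ} (h1 : 0 < N1) (h2 : 0 < Na)
    (hx : M.μ a < x) :
    M.x1 a N1 Na ≤ x ↔ N1 * ((M.μ 0 - x) / (x - M.μ a)) ≤ Na := by
  rw [x1, div_le_iff₀ (by positivity), ← mul_div_assoc, div_le_iff₀ (sub_pos.2 hx)]
  constructor <;> intro h <;> linarith

end Bandit

/-- Lemma bounding `N₁` when `g = 0`: two-sided linear bounds on the
allocation to the best arm in terms of the total allocation. -/
theorem statement_7 {K : ℕ} [NeZero K] (M : Bandit K)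
    (xa : Fin K → ℝ)
    (hxa_mem : ∀ a ∈ alt K, xa a ∈ Set.Ioo (M.μ a) (M.μ 0))
    (hxa_eq : ∀ a ∈ alt K, M.d (M.μ 0) (xa a) = M.d (M.μ a) (xa a))
    (Nv : Fin K → ℝ) (hNv : ∀ a, 0 < Nv a) (hg : M.g Nv = 0)
    (atil : Fin K) (hatil : atil ∈ alt K)
    (hargmax : ∀ a ∈ alt K,
      M.d (M.μ 0) (M.x1 a (Nv 0) (Nv a)) / M.d (M.μ a) (M.x1 a (Nv 0) (Nv a)) ≤
        M.d (M.μ 0) (M.x1 atil (Nv 0) (Nv atil)) /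
          M.d (M.μ atil) (M.x1 atil (Nv 0) (Nv atil)))
    (xt : ℝ) (hxt_mem : xt ∈ Set.Ioo (M.μ atil) (M.μ 0))
    (hxt_eq : M.d (M.μ 0) xt = ((K : ℝ) - 1)⁻¹ * M.d (M.μ atil) xt) :
    (1 + ∑ a ∈ alt K, (M.μ 0 - xa a) / (xa a - M.μ a))⁻¹ * (∑ a, Nv a) ≤ Nv 0 ∧
    Nv 0 ≤ (1 + (M.μ 0 - xt) / (xt - M.μ atil))⁻¹ * (∑ a, Nv a) := by
  have hmem : ∀ a ∈ alt K, M.x1 a (Nv 0) (Nv a) ∈ Set.Ioo (M.μ a) (M.μ 0) :=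
    fun a ha => M.x1_mem (mem_alt.1 ha) (hNv 0) (hNv a)
  have hsum : ∑ a ∈ alt K, M.ratio a (M.x1 a (Nv 0) (Nv a)) = 1 := sub_eq_zero.1 hg
  rw [sum_eq_add_sum_alt]
  constructor
  · have hle : ∀ a ∈ alt K, Nv a ≤ Nv 0 * ((M.μ 0 - xa a) / (xa a - M.μ a)) := by
      intro a ha
      rw [← M.le_x1_iff (hNv 0) (hNv a) (hxa_mem a ha).1,
        ← (M.ratio_strictAntiOn a).le_iff_ge (hmem a ha) (hxa_mem a ha)]
      have hone : M.ratio a (xa a) = 1 := by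
        rw [Bandit.ratio, hxa_eq a ha, div_self (M.d_low_pos (hxa_mem a ha)).ne']
      rw [hone, ← hsum]
      exact Finset.single_le_sum
        (f := fun a => M.ratio a (M.x1 a (Nv 0) (Nv a)))
        (fun i hi => (M.ratio_pos (hmem i hi)).le) ha
    have hnonneg : 0 ≤ ∑ a ∈ alt K, (M.μ 0 - xa a) / (xa a - M.μ a) :=
      Finset.sum_nonneg fun a ha => div_nonneg (sub_pos.2 (hxa_mem a ha).2).le
        (sub_pos.2 (hxa_mem a ha).1).le
    rw [inv_mul_le_iff₀ (by positivity), add_mul, one_mul, mul_comm _ (Nv 0), Finset.mul_sum]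
    gcongr with a ha
    exact hle a ha
  · have hK : (0 : ℝ) < (K : ℝ) - 1 := by
      have : (2 : ℝ) ≤ K := by exact_mod_cast M.two_le
      linarith
    have hle : Nv 0 * ((M.μ 0 - xt) / (xt - M.μ atil)) ≤ Nv atil := by
      rw [← M.x1_le_iff (hNv 0) (hNv atil) hxt_mem.1,
        ← (M.ratio_strictAntiOn atil).le_iff_ge hxt_mem (hmem atil hatil)]
      have hval : M.ratio atil xt = ((K : ℝ) - 1)⁻¹ := by
        rw [Bandit.ratio, hxt_eq, mul_div_cancel_right₀ _ (M.d_low_pos hxt_mem).ne']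
      have hcard := Finset.sum_le_card_nsmul (alt K) _ _ hargmax
      rw [nsmul_eq_mul, card_alt] at hcard
      rw [hval, inv_le_iff_one_le_mul₀' hK]
      exact hsum.symm.le.trans hcard
    have hnonneg : 0 ≤ (M.μ 0 - xt) / (xt - M.μ atil) :=
      div_nonneg (sub_pos.2 hxt_mem.2).le (sub_pos.2 hxt_mem.1).le
    have hsingle := Finset.single_le_sum (fun i _ => (hNv i).le) hatil
    rw [le_inv_mul_iff₀ (by positivity), add_mul, one_mul, mul_comm _ (Nv 0)]
    linarith
end
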